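/- For every k ≥ 1, the number of cyclic permutations of [2k] whose unique cycle is generalized up-down equals E_{2k} − (k−1) · E_{2k-1}. -/

import Mathlib

open Equiv Finset

/-- `π` is an up-down permutation of `[n]` in one-line notation (0-indexed):
`π 0 < π 1 > π 2 < π 3 > ⋯`. -/
def IsUpDownPerm {n : ℕ} (π : Equiv.Perm (Fin n)) : Prop :=
  ∀ i j : Fin n, (j : ℕ) = (i : ℕ) + 1 →
    (((i : ℕ) % 2 = 0 → π i < π j) ∧ ((i : ℕ) % 2 = 1 → π j < π i))

/-- The Euler number `E n`: the number of up-down permutations of `[n]`. -/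
noncomputable def eulerE (n : ℕ) : ℕ :=
  Nat.card {π : Equiv.Perm (Fin n) // IsUpDownPerm π}

/-- The length of the cycle of `π` containing `x` (fixed points give length `1`). -/
noncomputable def cycLen {n : ℕ} (π : Equiv.Perm (Fin n)) (x : Fin n) : ℕ :=
  Function.minimalPeriod (⇑π) x

/-- `x` is the smallest element of its cycle of `π`. -/
def IsOrbitMin {n : ℕ} (π : Equiv.Perm (Fin n)) (x : Fin n) : Prop :=
  ∀ k : ℕ, x ≤ (π ^ k) x

/-- The cyclic representation `x, π x, π² x, …` (of length `cycLen π x`) of the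
cycle of `π` containing `x` has the up-down pattern `x < π x > π² x < ⋯`. -/
def CycleUpDownAt {n : ℕ} (π : Equiv.Perm (Fin n)) (x : Fin n) : Prop :=
  ∀ i : ℕ, i + 1 < cycLen π x →
    ((i % 2 = 0 → (π ^ i) x < (π ^ (i + 1)) x) ∧
     (i % 2 = 1 → (π ^ (i + 1)) x < (π ^ i) x))

/-- `π` is cycle-up-down: every cycle, written in standard form
(starting at its smallest element), is up-down. -/
def IsCUD {n : ℕ} (π : Equiv.Perm (Fin n)) : Prop :=
  ∀ x : Fin n, IsOrbitMin π x → CycleUpDownAt π x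

/-- The number of cycles of `π` (fixed points included), counted via the
smallest elements of the cycles. -/
noncomputable def cycleCount {n : ℕ} (π : Equiv.Perm (Fin n)) : ℕ :=
  Nat.card {x : Fin n // IsOrbitMin π x}

/-- The number of cycles of `π` of even length. -/
noncomputable def evenCycleCount {n : ℕ} (π : Equiv.Perm (Fin n)) : ℕ :=
  Nat.card {x : Fin n // IsOrbitMin π x ∧ Even (cycLen π x)}

/-- The number of cycles of `π` of odd length. -/
noncomputable def oddCycleCount {n : ℕ} (π : Equiv.Perm (Fin n)) : ℕ :=
  Nat.card {x : Fin n // IsOrbitMin π x ∧ Odd (cycLen π x)}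

/-- The number of excedances of `π`. -/
noncomputable def excCount {n : ℕ} (π : Equiv.Perm (Fin n)) : ℕ :=
  Nat.card {i : Fin n // i < π i}

/-- The number of left-to-right minima of `π` (in one-line notation). -/
noncomputable def lrmCount {n : ℕ} (π : Equiv.Perm (Fin n)) : ℕ :=
  Nat.card {i : Fin n // ∀ j : Fin n, j < i → π i < π j}

/-- The number of extreme elements of `π`: entries in position `≥ 2`
(0-indexed: position `≥ 1`) that are left-to-right minima or maxima. -/
noncomputable def extrCount {n : ℕ} (π : Equiv.Perm (Fin n)) : ℕ :=
  Nat.card {i : Fin n // (i : ℕ) ≠ 0 ∧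
    ((∀ j : Fin n, j < i → π i < π j) ∨ (∀ j : Fin n, j < i → π j < π i))}

/-- Auxiliary (fuel-based) computation of the length of the `s`-driven
min/max subsequence of a list: at step `j` (0-indexed) pick the minimum of the
remaining list if `s j = true`, its maximum if `s j = false`, and continue with
the part of the list strictly to the right of the picked entry. -/
def msLenAux : ℕ → (ℕ → Bool) → List ℕ → ℕ
  | 0, _, _ => 0
  | _, _, [] => 0
  | fuel + 1, s, a :: t =>
      let l := a :: t
      let v := if s 0 then l.foldr min a else l.foldr max a
      1 + msLenAux fuel (fun i => s (i + 1)) ((l.dropWhile (· != v)).tail)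

/-- The length of the `s`-driven min/max subsequence of a list
(`s j = true` means minimum at step `j`, `s j = false` means maximum). -/
def msLen (s : ℕ → Bool) (l : List ℕ) : ℕ := msLenAux l.length s l

/-- The one-line notation of `π` as a list of natural numbers. -/
def oneLine {n : ℕ} (π : Equiv.Perm (Fin n)) : List ℕ :=
  List.ofFn fun i => ((π i : ℕ))

/-- The statistic `m_s(π)`: the length of the `s`-driven min/max subsequence
of the one-line notation of `π`. -/
def msStat {n : ℕ} (s : ℕ → Bool) (π : Equiv.Perm (Fin n)) : ℕ :=
  msLen s (oneLine π)

/-- `st π`: the length of the min-max sequence of `π` (alternately take the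
minimum, the maximum, the minimum, … of what remains to the right). -/
def stStat {n : ℕ} (π : Equiv.Perm (Fin n)) : ℕ :=
  msStat (fun i => i % 2 == 0) π

/-- `π` is a cyclic permutation: it consists of a single cycle. -/
def IsCyclicPerm {n : ℕ} (π : Equiv.Perm (Fin n)) : Prop :=
  ∀ x y : Fin n, π.SameCycle x y

/-- The number of up-down cycles of `π` having length `k`. -/
noncomputable def udLenCount {n : ℕ} (π : Equiv.Perm (Fin n)) (k : ℕ) : ℕ :=
  Nat.card {x : Fin n // IsOrbitMin π x ∧ cycLen π x = k ∧ CycleUpDownAt π x}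

/-- `ud π`: the number of up-down cycles of `π`. -/
noncomputable def udCount {n : ℕ} (π : Equiv.Perm (Fin n)) : ℕ :=
  Nat.card {x : Fin n // IsOrbitMin π x ∧ CycleUpDownAt π x}

/-- `r n`: the number of permutations of `[n]` having no up-down cycles. -/
noncomputable def noUDCyclesCount (n : ℕ) : ℕ :=
  Nat.card {π : Equiv.Perm (Fin n) // ∀ x : Fin n, IsOrbitMin π x → ¬ CycleUpDownAt π x}

/-!
Reading an up-down word `σ 0, σ 1, …` as a cycle and marking its first letter shows that `E_{2k}`
counts the cyclic permutations of `[2k]` together with a starting point from which the cycle is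
up-down. Such a cycle has a single starting point, unless it alternates all the way around, in which
case each of its `k` ascents is one. Started just after its maximum, an alternating cycle is read as
an up-down word ending with the maximum, and deleting the maximum leaves an arbitrary up-down word
of length `2k - 1`. Hence `E_{2k} = #cycles + (k - 1) E_{2k-1}`.
-/

/-- Ascents `x < π x` and non-ascents alternate along every cycle of `π`, including across the end
of any cyclic representation. This excludes fixed points and cycles of odd length. -/
def IsAlternating {α : Type*} [LT α] (π : Perm α) : Prop :=
  ∀ x, π x < π (π x) ↔ ¬ x < π x

namespace IsAlternating

theorem pow_lt_pow_succ_iff {α : Type*} [LT α] {π : Perm α} (h : IsAlternating π) {a : α}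
    (ha : a < π a) (i : ℕ) : (π ^ i) a < (π ^ (i + 1)) a ↔ Even i := by
  induction i with
  | zero => simpa using ha
  | succ i ih =>
    simp only [pow_succ', Perm.mul_apply] at ih ⊢
    rw [h, ih, Nat.even_add_one]

theorem two_mul_card_ascents {α : Type*} [LT α] [Finite α] {π : Perm α} (h : IsAlternating π) :
    2 * Nat.card {a // a < π a} = Nat.card α := by
  classical
  have card_ascents_eq : Nat.card {a // a < π a} = Nat.card {a // ¬ a < π a} :=
    Nat.card_congr (π.subtypeEquiv fun a ↦ by rw [h, not_not])
  rw [← Nat.card_congr (sumCompl fun a ↦ a < π a), Nat.card_sum, ← card_ascents_eq, two_mul]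

end IsAlternating

namespace IsCyclicPerm

variable {n : ℕ} {π : Perm (Fin n)}

theorem isCycleOn_univ (hπ : IsCyclicPerm π) :
    π.IsCycleOn ((univ : Finset (Fin n)) : Set (Fin n)) :=
  ⟨by simp, fun x _ y _ ↦ hπ x y⟩

theorem pow_apply_eq_pow_apply (hπ : IsCyclicPerm π) (a : Fin n) {i j : ℕ} :
    (π ^ i) a = (π ^ j) a ↔ i ≡ j [MOD n] := by
  simpa using hπ.isCycleOn_univ.pow_apply_eq_pow_apply (mem_univ a) (m := i) (n := j)

theorem pow_card_apply (hπ : IsCyclicPerm π) (a : Fin n) : (π ^ n) a = a := by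
  simpa using hπ.isCycleOn_univ.pow_card_apply (mem_univ a)

theorem exists_pow_apply_eq (hπ : IsCyclicPerm π) (a b : Fin n) : ∃ i < n, (π ^ i) a = b := by
  simpa using hπ.isCycleOn_univ.exists_pow_eq (mem_univ a) (mem_univ b)

theorem cycLen_eq (hπ : IsCyclicPerm π) (a : Fin n) : cycLen π a = n := by
  refine Nat.dvd_right_iff_eq.1 fun i ↦ ?_
  rw [cycLen, ← Function.isPeriodicPt_iff_minimalPeriod_dvd, Function.IsPeriodicPt,
    Function.IsFixedPt, ← Perm.coe_pow]
  simpa using hπ.isCycleOn_univ.pow_apply_eq (mem_univ a) (n := i)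

theorem cycleUpDownAt_iff (hπ : IsCyclicPerm π) {a : Fin n} :
    CycleUpDownAt π a ↔ ∀ i, i + 1 < n → ((π ^ i) a < (π ^ (i + 1)) a ↔ Even i) := by
  rw [CycleUpDownAt, hπ.cycLen_eq]
  refine forall₂_congr fun i hi ↦ ?_
  have : Nontrivial (Fin n) := Fin.nontrivial_iff_two_le.2 (by omega)
  have apply_ne : (π ^ (i + 1)) a ≠ (π ^ i) a := by
    rw [pow_succ', Perm.mul_apply]
    exact hπ.isCycleOn_univ.apply_ne (by simpa using Set.nontrivial_univ) (mem_univ _)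
  rw [← Nat.even_iff, ← Nat.odd_iff]
  rcases i.even_or_odd with even_i | odd_i
  · simp [even_i]
  · simp [odd_i, Nat.not_even_iff_odd.2 odd_i, apply_ne.le_iff_lt]

theorem cycleUpDownAt_iff_lt_apply_of_isAlternating (hπ : IsCyclicPerm π) (alt : IsAlternating π)
    {a : Fin n} : CycleUpDownAt π a ↔ a < π a := by
  have two_le : 2 ≤ n := by
    rw [← Fin.nontrivial_iff_two_le, ← not_subsingleton_iff_nontrivial]
    intro _
    simpa [Subsingleton.elim (π a) a] using alt a
  rw [hπ.cycleUpDownAt_iff]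
  exact ⟨fun h ↦ by simpa using h 0 two_le, fun ha i _ ↦ alt.pow_lt_pow_succ_iff ha i⟩

theorem isAlternating_of_pow_lt_pow_succ_iff (hπ : IsCyclicPerm π) (even_n : Even n) (a : Fin n)
    (ascent_iff : ∀ i < n, ((π ^ i) a < (π ^ (i + 1)) a ↔ Even i)) : IsAlternating π := by
  have ascent_iff' (i : ℕ) : (π ^ i) a < (π ^ (i + 1)) a ↔ Even i := by
    rw [(hπ.pow_apply_eq_pow_apply a).2 (i.mod_modEq n).symm,
      (hπ.pow_apply_eq_pow_apply a).2 ((i.mod_modEq n).symm.add_right 1),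
      ascent_iff _ (i.mod_lt a.pos), even_n.mod_even_iff]
  intro x
  obtain ⟨i, -, rfl⟩ := hπ.exists_pow_apply_eq a x
  have ascent_succ_iff := ascent_iff' (i + 1)
  rw [Nat.even_add_one, ← ascent_iff' i] at ascent_succ_iff
  simpa only [pow_succ', Perm.mul_apply] using ascent_succ_iff

theorem isAlternating_of_le_pow_pred (hπ : IsCyclicPerm π) (even_n : Even n) {a : Fin n}
    (ha : CycleUpDownAt π a) (hlast : a ≤ (π ^ (n - 1)) a) : IsAlternating π := by
  refine hπ.isAlternating_of_pow_lt_pow_succ_iff even_n a fun i hi ↦ ?_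
  obtain hi' | rfl : i + 1 < n ∨ i = n - 1 := by omega
  · exact hπ.cycleUpDownAt_iff.1 ha i hi'
  · have odd_pred : ¬ Even (n - 1) := by
      rw [← Nat.even_add_one, Nat.sub_add_cancel a.pos]
      exact even_n
    simpa [Nat.sub_add_cancel a.pos, hπ.pow_card_apply, odd_pred] using hlast

theorem cycleUpDownAt_unique (hπ : IsCyclicPerm π) (even_n : Even n) (not_alt : ¬ IsAlternating π)
    {a b : Fin n} (ha : CycleUpDownAt π a) (hb : CycleUpDownAt π b) : a = b := by
  have last_lt_a : (π ^ (n - 1)) a < a :=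
    not_le.1 fun h ↦ not_alt (hπ.isAlternating_of_le_pow_pred even_n ha h)
  have two_lt_n : 2 < n := by
    by_contra! n_le_two
    obtain rfl : n = 2 := by grind [a.pos]
    exact last_lt_a.not_gt (by simpa using hπ.cycleUpDownAt_iff.1 ha 0 one_lt_two)
  obtain ⟨j, j_lt, rfl⟩ := hπ.exists_pow_apply_eq a b
  rw [hπ.cycleUpDownAt_iff] at ha hb
  simp only [← Perm.mul_apply, ← pow_add] at hb
  obtain rfl | j_pos := j.eq_zero_or_pos
  · simp
  -- The ascent from position `n - 1` back to `a`, read in the word starting at `b = (π ^ j) a`.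
  have even_pred_sub : Even (n - 1 - j) := by
    rw [← hb (n - 1 - j) (by omega), show n - 1 - j + j = n - 1 by omega,
      show n - 1 - j + 1 + j = n by omega, hπ.pow_card_apply]
    exact last_lt_a
  have not_even_j : ¬ Even j := by grind
  have j_ascent : (π ^ j) a < (π ^ (j + 1)) a := by
    simpa [add_comm] using hb 0 (by omega)
  obtain j_lt_pred | rfl : j + 1 < n ∨ j = n - 1 := by omega
  · exact absurd ((ha j j_lt_pred).1 j_ascent) not_even_j
  · have not_ascent_a : ¬ a < π a := by
      have ascent_iff := hb 1 (by omega)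
      rw [show 1 + (n - 1) = n by omega, show 1 + 1 + (n - 1) = 1 + n by omega, pow_add,
        Perm.mul_apply, hπ.pow_card_apply] at ascent_iff
      simpa using ascent_iff
    exact absurd (by simpa using ha 0 (by omega)) not_ascent_a

end IsCyclicPerm

section OneLineToCycle

variable {n : ℕ}

/-- The cycle `(σ 0, σ 1, …, σ n)`, whose cyclic representation starting at `σ 0` is the one-line
notation of `σ`. -/
def oneLineCycle (σ : Perm (Fin (n + 1))) : Perm (Fin (n + 1)) :=
  σ * finRotate (n + 1) * σ⁻¹

theorem oneLineCycle_apply (σ : Perm (Fin (n + 1))) (i : Fin (n + 1)) :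
    oneLineCycle σ (σ i) = σ (i + 1) := by
  simp [oneLineCycle]

theorem oneLineCycle_pow_apply (σ : Perm (Fin (n + 1))) (i : Fin (n + 1)) :
    (oneLineCycle σ ^ (i : ℕ)) (σ 0) = σ i := by
  induction i using Fin.induction with
  | zero => simp
  | succ i ih =>
    rw [Fin.val_succ, pow_succ', Perm.mul_apply, ← Fin.val_castSucc, ih, oneLineCycle_apply,
      Fin.coeSucc_eq_succ]

theorem isCyclicPerm_oneLineCycle (σ : Perm (Fin (n + 1))) : IsCyclicPerm (oneLineCycle σ) := by
  have sameCycle_zero (x : Fin (n + 1)) : (oneLineCycle σ).SameCycle (σ 0) x :=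
    ⟨((σ⁻¹ x : Fin (n + 1)) : ℕ), by simp [oneLineCycle_pow_apply]⟩
  exact fun x y ↦ (sameCycle_zero x).symm.trans (sameCycle_zero y)

theorem cycleUpDownAt_oneLineCycle_iff (σ : Perm (Fin (n + 1))) :
    CycleUpDownAt (oneLineCycle σ) (σ 0) ↔ IsUpDownPerm σ := by
  rw [CycleUpDownAt, (isCyclicPerm_oneLineCycle σ).cycLen_eq]
  constructor
  · intro h i j hij
    simpa only [← hij, oneLineCycle_pow_apply] using h i (by omega)
  · intro h i hi
    have h_succ := h ⟨i, by omega⟩ ⟨i + 1, hi⟩ rfl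
    rwa [← oneLineCycle_pow_apply σ ⟨i, _⟩, ← oneLineCycle_pow_apply σ ⟨i + 1, _⟩] at h_succ

theorem IsCyclicPerm.exists_oneLineCycle_eq {π : Perm (Fin (n + 1))} (hπ : IsCyclicPerm π)
    (a : Fin (n + 1)) : ∃ σ, oneLineCycle σ = π ∧ σ 0 = a := by
  have surj : Function.Surjective fun i : Fin (n + 1) ↦ (π ^ (i : ℕ)) a := fun b ↦
    let ⟨i, hi, h⟩ := hπ.exists_pow_apply_eq a b
    ⟨⟨i, hi⟩, h⟩
  let σ : Perm (Fin (n + 1)) := ofBijective _ (Finite.surjective_iff_bijective.1 surj)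
  have σ_apply (i : Fin (n + 1)) : σ i = (π ^ (i : ℕ)) a := rfl
  refine ⟨σ, Perm.ext fun x ↦ ?_, by simp [σ_apply]⟩
  obtain ⟨i, rfl⟩ := σ.surjective x
  rw [oneLineCycle_apply, σ_apply, σ_apply, ← Perm.mul_apply, ← pow_succ',
    hπ.pow_apply_eq_pow_apply, Fin.val_add]
  simp [Nat.ModEq]

/-- Permutations correspond to cyclic permutations with a marked element: `σ` is sent to the cycle
`(σ 0, σ 1, …, σ n)` with `σ 0` marked. -/
noncomputable def markedCycleEquiv (n : ℕ) :
    Perm (Fin (n + 1)) ≃ {π : Perm (Fin (n + 1)) // IsCyclicPerm π} × Fin (n + 1) :=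
  ofBijective (fun σ ↦ (⟨oneLineCycle σ, isCyclicPerm_oneLineCycle σ⟩, σ 0)) <| by
    constructor
    · intro σ τ h
      simp only [Prod.mk.injEq, Subtype.mk.injEq] at h
      ext1 i
      rw [← oneLineCycle_pow_apply σ, ← oneLineCycle_pow_apply τ, h.1, h.2]
    · rintro ⟨⟨π, hπ⟩, a⟩
      obtain ⟨σ, rfl, rfl⟩ := hπ.exists_oneLineCycle_eq a
      exact ⟨σ, rfl⟩

open Classical in
theorem eulerE_succ_eq_sum_card_cycleUpDownAt (n : ℕ) :
    eulerE (n + 1) =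
      ∑ π : {π : Perm (Fin (n + 1)) // IsCyclicPerm π}, Nat.card {a // CycleUpDownAt π.1 a} := by
  rw [← Nat.card_sigma,
    ← Nat.card_congr (subtypeProdEquivSigmaSubtype fun
      (π : {π : Perm (Fin (n + 1)) // IsCyclicPerm π}) a ↦ CycleUpDownAt π.1 a)]
  exact Nat.card_congr ((markedCycleEquiv n).subtypeEquiv fun σ ↦
    (cycleUpDownAt_oneLineCycle_iff σ).symm)

end OneLineToCycle

section AlternatingCycles

variable {n : ℕ}

/-- The permutation of `[n + 1]` whose one-line notation is that of `τ` followed by the maximum. -/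
def appendLast (τ : Perm (Fin n)) : Perm (Fin (n + 1)) :=
  finSuccEquivLast.symm.permCongr (optionCongr τ)

theorem appendLast_last (τ : Perm (Fin n)) : appendLast τ (Fin.last n) = Fin.last n := by
  simp [appendLast, permCongr_apply]

theorem appendLast_castSucc (τ : Perm (Fin n)) (i : Fin n) :
    appendLast τ i.castSucc = (τ i).castSucc := by
  simp [appendLast, permCongr_apply]

theorem appendLast_injective : Function.Injective (appendLast (n := n)) :=
  (Equiv.injective _).comp optionCongr_injective

theorem exists_appendLast_eq {σ : Perm (Fin (n + 1))} (hσ : σ (Fin.last n) = Fin.last n) :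
    ∃ τ, appendLast τ = σ := by
  refine ⟨removeNone (finSuccEquivLast.permCongr σ), ?_⟩
  rw [appendLast, map_equiv_removeNone]
  ext1 i
  simp [hσ]

theorem isUpDownPerm_appendLast_iff (odd_n : Odd n) (τ : Perm (Fin n)) :
    IsUpDownPerm (appendLast τ) ↔ IsUpDownPerm τ := by
  refine ⟨fun h i j hij ↦ ?_, fun h i j hij ↦ ?_⟩
  · simpa [appendLast_castSucc] using h i.castSucc j.castSucc (by simpa using hij)
  · have hi : i ≠ Fin.last n := by rintro rfl; grind [j.is_lt]
    obtain ⟨i, rfl⟩ := Fin.exists_castSucc_eq.2 hi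
    rw [Fin.val_castSucc] at hij
    induction j using Fin.lastCases with
    | last =>
      have even_i : (i : ℕ) % 2 = 0 := by grind
      simp [even_i, appendLast_castSucc, appendLast_last, Fin.castSucc_lt_last]
    | cast j => simpa [appendLast_castSucc] using h i j (by simpa using hij)

theorem card_isUpDownPerm_last_eq_last (odd_n : Odd n) :
    Nat.card {σ : Perm (Fin (n + 1)) // IsUpDownPerm σ ∧ σ (Fin.last n) = Fin.last n} =
      eulerE n := by
  symm
  refine Nat.card_eq_of_bijective (fun τ ↦ ⟨appendLast τ.1,
    (isUpDownPerm_appendLast_iff odd_n _).2 τ.2, appendLast_last _⟩) ⟨?_, ?_⟩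
  · exact fun τ τ' h ↦ Subtype.ext (appendLast_injective (congrArg Subtype.val h))
  · rintro ⟨σ, hσ, hlast⟩
    obtain ⟨τ, rfl⟩ := exists_appendLast_eq hlast
    exact ⟨⟨τ, (isUpDownPerm_appendLast_iff odd_n τ).1 hσ⟩, rfl⟩

theorem isUpDownPerm_and_last_eq_last_iff (odd_n : Odd n) (σ : Perm (Fin (n + 1))) :
    IsUpDownPerm σ ∧ σ (Fin.last n) = Fin.last n ↔
      IsAlternating (oneLineCycle σ) ∧ oneLineCycle σ (Fin.last n) = σ 0 := by
  have cyclic := isCyclicPerm_oneLineCycle σ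
  have last_iff : σ (Fin.last n) = Fin.last n ↔ oneLineCycle σ (Fin.last n) = σ 0 := by
    rw [← Fin.last_add_one n, ← oneLineCycle_apply, eq_comm, (oneLineCycle σ).injective.eq_iff]
  rw [← last_iff, ← cycleUpDownAt_oneLineCycle_iff]
  refine and_congr_left fun hlast ↦ ⟨fun h ↦ ?_, fun alt ↦ ?_⟩
  · refine cyclic.isAlternating_of_le_pow_pred odd_n.add_one h ?_
    have pow_eq := oneLineCycle_pow_apply σ (Fin.last n)
    rw [Fin.val_last, hlast] at pow_eq
    simpa [pow_eq] using Fin.le_last _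
  · rw [cyclic.cycleUpDownAt_iff_lt_apply_of_isAlternating alt, ← last_iff.1 hlast, alt]
    exact (Fin.le_last _).not_gt

theorem card_isCyclicPerm_isAlternating (odd_n : Odd n) :
    Nat.card {π : {π : Perm (Fin (n + 1)) // IsCyclicPerm π} // IsAlternating π.1} = eulerE n := by
  rw [← card_isUpDownPerm_last_eq_last odd_n]
  calc
    _ = Nat.card ({π | IsAlternating π.1}.graphOn
          fun π : {π : Perm (Fin (n + 1)) // IsCyclicPerm π} ↦ π.1 (Fin.last n)) :=
      (Set.natCard_graphOn _ _).symm
    _ = _ := (Nat.card_congr ((markedCycleEquiv n).subtypeEquiv fun σ ↦ by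
      rw [Set.mem_graphOn]
      exact isUpDownPerm_and_last_eq_last_iff odd_n σ)).symm

end AlternatingCycles

open Classical in
theorem IsCyclicPerm.card_cycleUpDownAt {n : ℕ} {π : Perm (Fin (n + 1))} (hπ : IsCyclicPerm π)
    (odd_n : Odd n) :
    Nat.card {a // CycleUpDownAt π a} =
      (if ∃ a, CycleUpDownAt π a then 1 else 0) + n / 2 * if IsAlternating π then 1 else 0 := by
  by_cases alt : IsAlternating π
  · have two_mul_card : 2 * Nat.card {a // CycleUpDownAt π a} = n + 1 := by
      simpa [hπ.cycleUpDownAt_iff_lt_apply_of_isAlternating alt]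
        using alt.two_mul_card_ascents
    have card_pos : 0 < Nat.card {a // CycleUpDownAt π a} := by omega
    have exists_upDown : ∃ a, CycleUpDownAt π a :=
      nonempty_subtype.1 (Nat.card_pos_iff.1 card_pos).1
    simp only [exists_upDown, alt, if_true]
    omega
  · by_cases exists_upDown : ∃ a, CycleUpDownAt π a
    · have : Subsingleton {a // CycleUpDownAt π a} :=
        ⟨fun a b ↦ Subtype.ext (hπ.cycleUpDownAt_unique odd_n.add_one alt a.2 b.2)⟩
      have : Nonempty {a // CycleUpDownAt π a} := nonempty_subtype.2 exists_upDown
      simp only [Nat.card_unique, exists_upDown, alt, if_true, if_false, mul_zero, add_zero]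
    · have : IsEmpty {a // CycleUpDownAt π a} := ⟨fun a ↦ exists_upDown ⟨a, a.2⟩⟩
      simp [exists_upDown, alt]

theorem card_isCyclicPerm_exists_cycleUpDownAt_add {n : ℕ} (odd_n : Odd n) :
    Nat.card {π : Perm (Fin (n + 1)) // IsCyclicPerm π ∧ ∃ a, CycleUpDownAt π a} +
      n / 2 * eulerE n = eulerE (n + 1) := by
  classical
  rw [eulerE_succ_eq_sum_card_cycleUpDownAt, sum_congr rfl fun π _ ↦ π.2.card_cycleUpDownAt odd_n,
    sum_add_distrib, ← mul_sum, sum_boole, sum_boole, ← card_isCyclicPerm_isAlternating odd_n,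
    ← Nat.card_congr (subtypeSubtypeEquivSubtypeInter _ _)]
  simp [Fintype.card_subtype]

/-- cyclic permutations of `[2k]` with a generalized up-down cycle. -/
theorem stmt7 (k : ℕ) (hk : 1 ≤ k) :
    (Nat.card {π : Equiv.Perm (Fin (2 * k)) //
      IsCyclicPerm π ∧ ∃ a : Fin (2 * k), CycleUpDownAt π a} : ℤ) =
      eulerE (2 * k) - ((k : ℤ) - 1) * eulerE (2 * k - 1) := by
  obtain ⟨j, rfl⟩ := Nat.exists_eq_add_of_le' hk
  have count := card_isCyclicPerm_exists_cycleUpDownAt_add (odd_two_mul_add_one j)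
  rw [show (2 * j + 1) / 2 = j by omega] at count
  rw [show 2 * (j + 1) = 2 * j + 1 + 1 by ring, ← count]
  push_cast
  simp
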